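/- Let E = {e_1,…,e_m} (m ≥ 1) be a uniform system of substring equations with e_i : T[p_i..q_i] = T[p'_i..q'_i]. Setting p_{m+1} = p_1 and q_{m+1} = q_1, define R = Σ_{j=1}^{m} |p_{j+1} − p'_j| and, for 1 ≤ i ≤ m, r_i = Σ_{j=1}^{i} (p_{j+1} − p'_j). Let S be a positive integer. If T satisfies each of e_2,…,e_m with shortage S, then for every i ∈ {1,…,m} the fragments T[p'_1 + R + S .. q'_1 − R − S] and T[p_{i+1} − r_i + R + S .. q_{i+1} − r_i − R − S] are equal, i.e., T(p'_1 + R + S + k) = T(p_{i+1} − r_i + R + S + k) for all integers k with 0 ≤ k ≤ (q'_1 − R − S) − (p'_1 + R + S). -/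

import Mathlib

/-! The equalities are chained by induction on `i`. Since `p_{i+1} - r_i = p'_i - r_{i-1}`, the first
fragment is literally the one for `i = 1`, and the fragment for `i + 1` is the image, under the
shift of the equation `e_{i+1}`, of the fragment for `i`. The equation (with shortage `S`) applies
there because the partial sum `r_i` satisfies `|r_i| ≤ R` (`abs_sum_range_le_sum_range_abs`), so the
margin `R` on both sides absorbs the displacement by `r_i`; uniformity ensures that the right ends
match as well. -/

lemma abs_sum_range_le_sum_range_abs (g : ℕ → ℤ) {i m : ℕ} (h : i ≤ m) :
    |∑ j ∈ Finset.range i, g j| ≤ ∑ j ∈ Finset.range m, |g j| :=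
  (Finset.abs_sum_le_sum_abs _ _).trans
    (Finset.sum_le_sum_of_subset_of_nonneg (Finset.range_mono h) fun _ _ _ => abs_nonneg _)

/-- A substring equation `T[p..q] = T[p'..q']`. -/
structure SubEq where
  p : ℤ
  q : ℤ
  p' : ℤ
  q' : ℤ
deriving DecidableEq

/-- The equation is well-formed: both fragments have the same length. -/
def SubEq.valid (e : SubEq) : Prop := e.q - e.p = e.q' - e.p'

/-- The (oriented) shift of the equation. -/
def SubEq.shift (e : SubEq) : ℤ := e.p' - e.p

/-- The length of the equation. -/
def SubEq.len (e : SubEq) : ℤ := e.q - e.p + 1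

/-- The equation is on a text of length `n`. -/
def SubEq.onText (e : SubEq) (n : ℤ) : Prop :=
  1 ≤ e.p ∧ 1 ≤ e.p' ∧ e.q ≤ n ∧ e.q' ≤ n

/-- `T` satisfies the equation `e` with shortage `S`. -/
def SatS {α : Type*} (T : ℤ → α) (e : SubEq) (S : ℤ) : Prop :=
  ∀ k : ℤ, e.p + S ≤ k → k ≤ e.q - S → T k = T (k + e.shift)

/-- The Claim inside Lemma 12: for a uniform cycle of substring equations
(indices modulo `m`, so `p_{m+1} = p_1`, `q_{m+1} = q_1`), if `e_2,…,e_m` are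
satisfied with shortage `S`, then for every `i ∈ {1,…,m}` the fragments
`T[p'_1 + R + S .. q'_1 - R - S]` and
`T[p_{i+1} - r_i + R + S .. q_{i+1} - r_i - R - S]` are equal, where
`r_i = Σ_{j=1}^{i} (p_{j+1} - p'_j)` and `R = Σ_{j=1}^{m} |p_{j+1} - p'_j|`. -/
theorem subEq_cycle_claim {α : Type*} (T : ℤ → α) (m : ℕ) (hm : 1 ≤ m)
    (f : ℕ → SubEq)
    (hv : ∀ i < m, (f i).valid)
    (hu : ∀ i < m, (f i).len = (f 0).len)
    (R : ℤ)
    (hR : R = ∑ j ∈ Finset.range m, |(f ((j + 1) % m)).p - (f j).p'|)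
    (S : ℤ) (hS : 0 < S)
    (hsat : ∀ j : ℕ, 1 ≤ j → j < m → SatS T (f j) S) :
    ∀ i : ℕ, 1 ≤ i → i ≤ m →
      ∀ k : ℤ, 0 ≤ k → k ≤ ((f 0).q' - R - S) - ((f 0).p' + R + S) →
        T ((f 0).p' + R + S + k) =
          T ((f (i % m)).p -
              (∑ j ∈ Finset.range i, ((f ((j + 1) % m)).p - (f j).p')) + R + S + k) := by
  intro i hi
  induction i, hi using Nat.le_induction with
  | base =>
    intro _ k _ _
    simp only [Finset.sum_range_one, zero_add]
    congr 1
    ring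
  | succ i hi ih =>
    intro him k hk0 hk
    rw [ih (by omega) k hk0 hk, Finset.sum_range_succ]
    have hlt : i < m := him
    have hb := abs_sum_range_le_sum_range_abs
      (fun j => (f ((j + 1) % m)).p - (f j).p') hlt.le
    simp only [← hR] at hb
    rw [Nat.mod_eq_of_lt hlt]
    generalize ∑ j ∈ Finset.range i, ((f ((j + 1) % m)).p - (f j).p') = r at hb ⊢
    obtain ⟨hb1, hb2⟩ := abs_le.mp hb
    have hv0 := hv 0 (by omega)
    have hui := hu i hlt
    simp only [SubEq.valid, SubEq.len] at hv0 hui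
    rw [hsat i hi hlt _ (by linarith) (by linarith), SubEq.shift]
    congr 1
    ring
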